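/- For every ε > 0 there exists a constant C > 0 such that for all integers k ≥ 3, all integers n with n > k, and every integer t with C · k^(5/2+ε) ≤ t ≤ k^3, every equinumerous t-coloring of [t·n] contains a rainbow arithmetic progression of length k. -/

import Mathlib

/-- `c` is an equinumerous `t`-coloring of `[t*n] = {1, ..., t*n}`:
each color class `c⁻¹(i)` for `i ∈ {1, ..., t}` has exactly `n` elements. -/
def EquinumerousColoring (t n : ℕ) (c : ℕ → ℕ) : Prop :=
  ∀ i, 1 ≤ i → i ≤ t → ((Finset.Icc 1 (t * n)).filter (fun x => c x = i)).card = n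

/-- The arithmetic progression with first term `a`, common difference `d` and
length `k` is rainbow with respect to the coloring `c`. -/
def RainbowAP (k : ℕ) (c : ℕ → ℕ) (a d : ℕ) : Prop :=
  ∀ i < k, ∀ j < k, c (a + i * d) = c (a + j * d) → i = j

section Helpers

open scoped ArithmeticFunction.vonMangoldt

/-- `d` has no prime factor below `k`. -/
def IsRough (k d : ℕ) : Prop := ∀ p : ℕ, p.Prime → p ∣ d → k ≤ p

open Classical in
/-- The `k`-rough numbers in `[1, N]`. -/
noncomputable def roughSet (k N : ℕ) : Finset ℕ := (Finset.Ioc 0 N).filter (IsRough k)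

lemma mem_roughSet {k N d : ℕ} : d ∈ roughSet k N ↔ (0 < d ∧ d ≤ N) ∧ IsRough k d := by
  simp [roughSet]

lemma IsRough.one (k : ℕ) : IsRough k 1 := by
  intro p hp h
  exact absurd (Nat.dvd_one.mp h) hp.one_lt.ne'

lemma IsRough.mul {k a b : ℕ} (ha : IsRough k a) (hb : IsRough k b) : IsRough k (a * b) := by
  intro p hp h
  rcases (Nat.Prime.dvd_mul hp).mp h with h | h
  · exact ha p hp h
  · exact hb p hp h

lemma IsRough.coprime {k m d : ℕ} (hd : IsRough k d) (hm : 0 < m) (hmk : m < k) :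
    Nat.Coprime m d := by
  apply Nat.Coprime.symm
  by_contra h
  obtain ⟨p, hp, h1, h2⟩ := Nat.Prime.not_coprime_iff_dvd.mp h
  have := hd p hp h1
  have := Nat.le_of_dvd hm h2
  omega

lemma rough_unique {k m m' d d' : ℕ} (hd : IsRough k d) (hd' : IsRough k d')
    (hm : 0 < m) (hmk : m < k) (hm' : 0 < m') (hmk' : m' < k) (h : m * d = m' * d') :
    m = m' := by
  apply Nat.dvd_antisymm
  · exact (hd'.coprime hm hmk).dvd_of_dvd_mul_right (h ▸ dvd_mul_right m d)
  · exact (hd.coprime hm' hmk').dvd_of_dvd_mul_right (h ▸ dvd_mul_right m' d')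

/-- Lower half of Mertens' first theorem. -/
lemma mertens_lower {X : ℕ} (hX : 1 ≤ X) :
    Real.log X - 1 ≤ ∑ q ∈ Finset.Ioc 0 X, Λ q / q := by
  have hX0 : (0 : ℝ) < X := by exact_mod_cast hX
  have h1 : (X : ℝ) * Real.log X - X ≤ Real.log (X.factorial) := by
    have := Real.pow_div_factorial_le_exp (x := X) hX0.le X
    have h2 := Real.log_le_log (by positivity) this
    rw [Real.log_exp, Real.log_div (by positivity) (by positivity), Real.log_pow] at h2
    linarith
  have h2 : Real.log (X.factorial) = ∑ q ∈ Finset.Ioc 0 X, Λ q * ((X / q : ℕ) : ℝ) := by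
    rw [← ArithmeticFunction.sum_Ioc_mul_zeta_eq_sum, ArithmeticFunction.vonMangoldt_mul_zeta]
    simp only [ArithmeticFunction.log_apply]
    clear h1 hX hX0
    induction X with
    | zero => simp
    | succ n ih =>
      rw [Finset.sum_Ioc_succ_top (by omega), ← ih, Nat.factorial_succ, Nat.cast_mul,
        Real.log_mul (by positivity) (by positivity)]
      ring
  have h3 : Real.log (X.factorial) ≤ X * ∑ q ∈ Finset.Ioc 0 X, Λ q / q := by
    rw [h2, Finset.mul_sum]
    apply Finset.sum_le_sum
    intro q hq
    calc Λ q * ((X / q : ℕ) : ℝ) ≤ Λ q * (X / q) := by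
          gcongr
          exact Nat.cast_div_le
      _ = _ := by ring
  have h4 : (X : ℝ) * (Real.log X - 1) ≤ X * ∑ q ∈ Finset.Ioc 0 X, Λ q / q := by linarith
  exact le_of_mul_le_mul_left h4 hX0

lemma geom_bound (p J : ℕ) (hp : 2 ≤ p) :
    ∑ j ∈ Finset.Icc 1 J, (1 : ℝ) / ((p ^ j : ℕ) : ℝ)
      ≤ 2 / p - 2 * (1 / (p : ℝ) ^ J * (1 / p)) := by
  have hp' : (2 : ℝ) ≤ p := by exact_mod_cast hp
  have hp0 : (0 : ℝ) < p := by linarith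
  induction J with
  | zero =>
    simp [div_eq_mul_inv]
  | succ n ih =>
    rw [Finset.sum_Icc_succ_top (by omega)]
    have h : (1 : ℝ) / ((p ^ (n + 1) : ℕ) : ℝ) = 1 / (p : ℝ) ^ n * (1 / p) := by
      push_cast; rw [pow_succ]; field_simp
    have h' : (1 : ℝ) / (p : ℝ) ^ (n + 1) * (1 / p) = (1 / (p : ℝ) ^ n * (1 / p)) * (1 / p) := by
      rw [pow_succ]; field_simp
    rw [h, h']
    have hv : 0 ≤ 1 / (p : ℝ) ^ n * (1 / p) := by positivity
    have hq : (1 : ℝ) / p ≤ 1 / 2 := one_div_le_one_div_of_le (by norm_num) hp'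
    nlinarith [mul_le_mul_of_nonneg_left hq hv]

/-- The contribution of powers of small primes. -/
lemma smooth_sum (k X : ℕ) :
    ∑ q ∈ Finset.Ioc 0 X \ roughSet k X, Λ q / q
      ≤ 2 * Real.log k * (1 + Real.log k) := by
  classical
  have hlk : 0 ≤ Real.log k := Real.log_natCast_nonneg k
  set T := (Finset.Ioc 0 X \ roughSet k X).filter (fun q => IsPrimePow q) with hT
  have h1 : ∑ q ∈ Finset.Ioc 0 X \ roughSet k X, Λ q / q = ∑ q ∈ T, Λ q / q := by
    rw [hT, Finset.sum_filter]
    apply Finset.sum_congr rfl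
    intro q _
    split_ifs with h
    · rfl
    · rw [ArithmeticFunction.vonMangoldt_eq_zero_iff.mpr h, zero_div]
  have key : ∀ q ∈ T, ∃ p j : ℕ, p.Prime ∧ 1 ≤ j ∧ j ≤ X ∧ p ≤ k ∧ q = p ^ j := by
    intro q hq
    rw [hT, Finset.mem_filter, Finset.mem_sdiff, mem_roughSet, Finset.mem_Ioc] at hq
    obtain ⟨⟨hq1, hq2⟩, hq3⟩ := hq
    have hnr : ¬ IsRough k q := fun h => hq2 ⟨hq1, h⟩
    obtain ⟨p, j, hp, hj, rfl⟩ := (isPrimePow_nat_iff q).mp hq3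
    refine ⟨p, j, hp, hj, ?_, ?_, rfl⟩
    · exact (Nat.lt_pow_self hp.one_lt).le.trans hq1.2
    · by_contra hpk
      apply hnr
      intro r hr hrd
      have := (Nat.prime_dvd_prime_iff_eq hr hp).mp (hr.dvd_of_dvd_pow hrd)
      omega
  have hmaps : ∀ q ∈ T, q.minFac ∈ (Finset.Icc 1 k).filter Nat.Prime := by
    intro q hq
    obtain ⟨p, j, hp, hj, _, hpk, rfl⟩ := key q hq
    rw [Nat.Prime.pow_minFac hp (by omega)]
    simp [hp, hpk, hp.one_lt.le]
  rw [h1, ← Finset.sum_fiberwise_of_maps_to hmaps]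
  have h2 : ∀ p ∈ (Finset.Icc 1 k).filter Nat.Prime,
      ∑ q ∈ T.filter (fun q => q.minFac = p), Λ q / q ≤ 2 * Real.log k * (p : ℝ)⁻¹ := by
    intro p hp
    rw [Finset.mem_filter, Finset.mem_Icc] at hp
    have hp0 : (0 : ℝ) < p := by exact_mod_cast hp.2.pos
    have hlp : 0 ≤ Real.log p := Real.log_natCast_nonneg p
    have hlpk : Real.log p ≤ Real.log k :=
      Real.log_le_log hp0 (by exact_mod_cast hp.1.2)
    have hsub : T.filter (fun q => q.minFac = p) ⊆ (Finset.Icc 1 X).image (fun j => p ^ j) := by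
      intro q hq
      rw [Finset.mem_filter] at hq
      obtain ⟨r, j, hr, hj, hjX, hpk, rfl⟩ := key q hq.1
      have := hq.2
      rw [Nat.Prime.pow_minFac hr (by omega)] at this
      subst this
      exact Finset.mem_image.mpr ⟨j, Finset.mem_Icc.mpr ⟨hj, hjX⟩, rfl⟩
    calc _ ≤ ∑ q ∈ (Finset.Icc 1 X).image (fun j => p ^ j), Λ q / q := by
          apply Finset.sum_le_sum_of_subset_of_nonneg hsub
          intros
          exact div_nonneg ArithmeticFunction.vonMangoldt_nonneg (Nat.cast_nonneg _)
      _ = ∑ j ∈ Finset.Icc 1 X, Λ (p ^ j) / ((p ^ j : ℕ) : ℝ) := by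
          rw [Finset.sum_image]
          intro a _ b _ hab
          exact Nat.pow_right_injective hp.2.two_le hab
      _ = Real.log p * ∑ j ∈ Finset.Icc 1 X, (1 : ℝ) / ((p ^ j : ℕ) : ℝ) := by
          rw [Finset.mul_sum]
          apply Finset.sum_congr rfl
          intro j hj
          rw [Finset.mem_Icc] at hj
          rw [ArithmeticFunction.vonMangoldt_apply_pow (by omega),
            ArithmeticFunction.vonMangoldt_apply_prime hp.2]
          ring
      _ ≤ Real.log k * (2 / p) := by
          apply mul_le_mul hlpk _ _ hlk
          · have := geom_bound p X hp.2.two_le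
            have h0 : 0 ≤ 2 * (1 / (p : ℝ) ^ X * (1 / p)) := by positivity
            linarith
          · apply Finset.sum_nonneg; intros; positivity
      _ = _ := by ring
  calc _ ≤ ∑ p ∈ (Finset.Icc 1 k).filter Nat.Prime, 2 * Real.log k * (p : ℝ)⁻¹ :=
        Finset.sum_le_sum h2
    _ ≤ ∑ p ∈ Finset.Icc 1 k, 2 * Real.log k * (p : ℝ)⁻¹ := by
        apply Finset.sum_le_sum_of_subset_of_nonneg (Finset.filter_subset _ _)
        intros; positivity
    _ = 2 * Real.log k * (harmonic k : ℝ) := by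
        rw [← Finset.mul_sum, harmonic_eq_sum_Icc]; push_cast; rfl
    _ ≤ _ := by
        apply mul_le_mul_of_nonneg_left (harmonic_le_one_add_log k) (by positivity)

lemma rough_recursion (k n : ℕ) :
    ∑ q ∈ roughSet k n, Λ q * ((roughSet k (n / q)).card : ℝ)
      ≤ ((roughSet k n).card : ℝ) * Real.log n := by
  have h1 : ∀ d ∈ roughSet k n, ∑ q ∈ (roughSet k n).filter (fun q => q ∣ d), Λ q
      ≤ Real.log n := by
    intro d hd
    rw [mem_roughSet] at hd
    calc _ ≤ ∑ q ∈ d.divisors, Λ q := by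
          apply Finset.sum_le_sum_of_subset_of_nonneg
          · intro q hq
            rw [Finset.mem_filter] at hq
            exact Nat.mem_divisors.mpr ⟨hq.2, by omega⟩
          · intros; exact ArithmeticFunction.vonMangoldt_nonneg
      _ = Real.log d := ArithmeticFunction.vonMangoldt_sum
      _ ≤ Real.log n := by
          apply Real.log_le_log
          · exact_mod_cast hd.1.1
          · exact_mod_cast hd.1.2
  calc _ ≤ ∑ q ∈ roughSet k n, Λ q * (((roughSet k n).filter (fun d => q ∣ d)).card : ℝ) := by
        apply Finset.sum_le_sum
        intro q hq
        rw [mem_roughSet] at hq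
        apply mul_le_mul_of_nonneg_left _ ArithmeticFunction.vonMangoldt_nonneg
        norm_cast
        apply Finset.card_le_card_of_injOn (fun e => q * e)
        · intro e he
          rw [Finset.mem_coe, mem_roughSet] at he
          simp only [Finset.coe_filter, Set.mem_ofPred_eq, mem_roughSet]
          refine ⟨⟨⟨Nat.mul_pos hq.1.1 he.1.1, ?_⟩, hq.2.mul he.2⟩, dvd_mul_right _ _⟩
          calc q * e ≤ q * (n / q) := Nat.mul_le_mul_left _ he.1.2
            _ ≤ n := Nat.mul_div_le n q
        · intro a _ b _ hab
          exact Nat.eq_of_mul_eq_mul_left hq.1.1 hab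
    _ = ∑ d ∈ roughSet k n, ∑ q ∈ (roughSet k n).filter (fun q => q ∣ d), Λ q := by
        simp_rw [Finset.sum_filter]
        rw [Finset.sum_comm]
        apply Finset.sum_congr rfl
        intro q _
        rw [← Finset.sum_filter, Finset.sum_const, nsmul_eq_mul, mul_comm]
    _ ≤ ∑ d ∈ roughSet k n, Real.log n := Finset.sum_le_sum h1
    _ = _ := by rw [Finset.sum_const, nsmul_eq_mul]

lemma tail_sum (k n X : ℕ) :
    Chebyshev.theta n ≤ ∑ q ∈ roughSet k n \ roughSet k X, Λ q + Chebyshev.theta X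
      + Chebyshev.theta k := by
  classical
  set P : ℕ → Finset ℕ := fun m => (Finset.Ioc 0 m).filter Nat.Prime with hP
  have hth : ∀ m : ℕ, Chebyshev.theta m = ∑ p ∈ P m, Λ p := by
    intro m
    rw [Chebyshev.theta, Nat.floor_natCast]
    apply Finset.sum_congr rfl
    intro p hp
    rw [ArithmeticFunction.vonMangoldt_apply_prime (Finset.mem_filter.mp hp).2]
  have hun : ∀ A B : Finset ℕ, ∑ q ∈ A ∪ B, Λ q ≤ ∑ q ∈ A, Λ q + ∑ q ∈ B, Λ q := by
    intro A B
    rw [← Finset.sum_union_inter]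
    have : 0 ≤ ∑ q ∈ A ∩ B, Λ q :=
      Finset.sum_nonneg fun _ _ => ArithmeticFunction.vonMangoldt_nonneg
    linarith
  have hsub : P n ⊆ (roughSet k n \ roughSet k X) ∪ P X ∪ P k := by
    intro p hp
    simp only [hP, Finset.mem_filter, Finset.mem_Ioc] at hp
    simp only [hP, Finset.mem_union, Finset.mem_sdiff, mem_roughSet, Finset.mem_filter,
      Finset.mem_Ioc]
    by_cases h1 : p ≤ X
    · exact Or.inl (Or.inr ⟨⟨hp.1.1, h1⟩, hp.2⟩)
    by_cases h2 : p ≤ k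
    · exact Or.inr ⟨⟨hp.1.1, h2⟩, hp.2⟩
    refine Or.inl (Or.inl ⟨⟨hp.1, ?_⟩, fun h => h1 h.1.2⟩)
    intro r hr hrd
    have := (Nat.prime_dvd_prime_iff_eq hr hp.2).mp hrd
    omega
  rw [hth n, hth X, hth k]
  calc _ ≤ ∑ q ∈ (roughSet k n \ roughSet k X) ∪ P X ∪ P k, Λ q :=
        Finset.sum_le_sum_of_subset_of_nonneg hsub
          fun _ _ _ => ArithmeticFunction.vonMangoldt_nonneg
    _ ≤ _ := by
        have e1 := hun ((roughSet k n \ roughSet k X) ∪ P X) (P k)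
        have e2 := hun (roughSet k n \ roughSet k X) (P X)
        linarith

/-- The constant appearing in the lower bound for the number of rough numbers. -/
noncomputable def gam (k : ℕ) : ℝ :=
  Real.log (2 * (k : ℝ) ^ 2) + 2 + 2 * Real.log k * (1 + Real.log k)

lemma gam_pos (k : ℕ) (hk : 1 ≤ k) : 0 < gam k := by
  have hk' : (1 : ℝ) ≤ k := by exact_mod_cast hk
  have h0 : 0 ≤ Real.log k := Real.log_natCast_nonneg k
  have h1 : 0 ≤ Real.log (2 * (k : ℝ) ^ 2) := Real.log_nonneg (by nlinarith)
  unfold gam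
  positivity

lemma rough_lower (k : ℕ) (hk : 16 ≤ k)
    (hth : ∀ n : ℕ, k ≤ n → (n : ℝ) / 2 ≤ Chebyshev.theta n) (n : ℕ) (hn : k ^ 2 ≤ n) :
    1 / (4 * gam k) * ((n : ℝ) + 1) ≤ ((roughSet k n).card : ℝ) := by
  classical
  induction n using Nat.strong_induction_on with
  | _ n ih =>
  have hk0 : (16 : ℝ) ≤ k := by exact_mod_cast hk
  have hg := gam_pos k (by omega)
  set c := 1 / (4 * gam k) with hc
  have hcpos : 0 < c := by positivity
  have hcg : c * gam k = 1 / 4 := by rw [hc]; field_simp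
  have hkn : k ≤ n := by nlinarith
  have hnR : (k : ℝ) ^ 2 ≤ n := by exact_mod_cast hn
  have hn0 : (0 : ℝ) < n := by nlinarith
  set X := n / k ^ 2 with hX
  have hk2 : 0 < k ^ 2 := by positivity
  have hX1 : 1 ≤ X := (Nat.one_le_div_iff hk2).mpr hn
  have hX1R : (1 : ℝ) ≤ X := by exact_mod_cast hX1
  have hXn : X ≤ n := Nat.div_le_self _ _
  have hXle : (X : ℝ) * (k : ℝ) ^ 2 ≤ n := by exact_mod_cast Nat.div_mul_le_self n (k ^ 2)
  have hXge : (n : ℝ) ≤ (2 * (k : ℝ) ^ 2) * X := by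
    have : n ≤ (2 * k ^ 2) * X := by
      have := Nat.lt_div_mul_add (a := n) hk2
      rw [← hX] at this
      nlinarith
    exact_mod_cast this
  have hlogX : Real.log n ≤ Real.log (2 * (k : ℝ) ^ 2) + Real.log X := by
    rw [← Real.log_mul (by positivity) (by positivity)]
    exact Real.log_le_log hn0 hXge
  have hsubset : roughSet k X ⊆ roughSet k n := by
    intro q hq
    rw [mem_roughSet] at hq ⊢
    exact ⟨⟨hq.1.1, hq.1.2.trans hXn⟩, hq.2⟩
  -- first part of the sum
  have hA : c * n * (Real.log X - 1 - 2 * Real.log k * (1 + Real.log k))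
      ≤ ∑ q ∈ roughSet k X, Λ q * ((roughSet k (n / q)).card : ℝ) := by
    have h1 := mertens_lower hX1
    have h2 := smooth_sum k X
    have hsub : roughSet k X ⊆ Finset.Ioc 0 X := by
      intro q hq
      rw [mem_roughSet] at hq
      exact Finset.mem_Ioc.mpr hq.1
    rw [← Finset.sum_sdiff hsub] at h1
    calc _ ≤ c * n * ∑ q ∈ roughSet k X, Λ q / q := by
          apply mul_le_mul_of_nonneg_left _ (by positivity)
          linarith
      _ = ∑ q ∈ roughSet k X, c * n * (Λ q / q) := by rw [Finset.mul_sum]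
      _ ≤ _ := by
          apply Finset.sum_le_sum
          intro q hq
          rw [mem_roughSet] at hq
          have hq0 : (0 : ℝ) < q := by exact_mod_cast hq.1.1
          have hΛ : 0 ≤ Λ q := ArithmeticFunction.vonMangoldt_nonneg
          by_cases hq1 : q = 1
          · subst hq1
            simp [ArithmeticFunction.vonMangoldt_apply_one]
          have hlt : n / q < n := Nat.div_lt_self (by omega) (by omega)
          have hge : k ^ 2 ≤ n / q := by
            rw [Nat.le_div_iff_mul_le hq.1.1]
            calc k ^ 2 * q ≤ k ^ 2 * X := Nat.mul_le_mul_left _ hq.1.2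
              _ ≤ n := Nat.mul_div_le n _
          have hind := ih (n / q) hlt hge
          have hfl : (n : ℝ) / q ≤ ((n / q : ℕ) : ℝ) + 1 := by
            rw [div_le_iff₀ hq0]
            have := Nat.lt_div_mul_add (a := n) hq.1.1
            have : n ≤ (n / q + 1) * q := by nlinarith
            exact_mod_cast this
          calc c * n * (Λ q / q) = Λ q * (c * (n / q)) := by ring
            _ ≤ Λ q * (c * (((n / q : ℕ) : ℝ) + 1)) := by gcongr
            _ ≤ _ := by gcongr
  -- second part
  have hB : (n : ℝ) / 4 ≤ ∑ q ∈ roughSet k n \ roughSet k X,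
      Λ q * ((roughSet k (n / q)).card : ℝ) := by
    have h1 := tail_sum k n X
    have h2 := hth n hkn
    have h3 := Chebyshev.theta_le_log4_mul_x (x := (X : ℝ)) (by positivity)
    have h4 := Chebyshev.theta_le_log4_mul_x (x := (k : ℝ)) (by positivity)
    have hl4 : Real.log 4 ≤ 2 := by
      have : (4 : ℝ) = 2 ^ 2 := by norm_num
      rw [this, Real.log_pow]
      have := Real.log_two_lt_d9
      push_cast; linarith
    have h5 : Real.log 4 * (X : ℝ) ≤ 2 * X := by gcongr
    have h6 : Real.log 4 * (k : ℝ) ≤ 2 * k := by gcongr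
    have h7 : 16 * (k : ℝ) ≤ n := by nlinarith
    have hk256 : (256 : ℝ) ≤ (k : ℝ) ^ 2 := by nlinarith
    have h8 : 256 * (X : ℝ) ≤ n := by
      have := mul_le_mul_of_nonneg_left hk256 (by positivity : (0 : ℝ) ≤ X)
      linarith
    calc (n : ℝ) / 4 ≤ ∑ q ∈ roughSet k n \ roughSet k X, Λ q := by linarith
      _ ≤ _ := by
        apply Finset.sum_le_sum
        intro q hq
        rw [Finset.mem_sdiff, mem_roughSet] at hq
        have h1m : 1 ∈ roughSet k (n / q) := by
          rw [mem_roughSet]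
          exact ⟨⟨one_pos, (Nat.one_le_div_iff hq.1.1.1).mpr hq.1.1.2⟩, IsRough.one k⟩
        have : (1 : ℝ) ≤ ((roughSet k (n / q)).card : ℝ) := by
          exact_mod_cast Finset.card_pos.mpr ⟨1, h1m⟩
        exact le_mul_of_one_le_right ArithmeticFunction.vonMangoldt_nonneg this
  have hrec := rough_recursion k n
  rw [← Finset.sum_sdiff hsubset] at hrec
  have hlogn : 0 < Real.log n := Real.log_pos (by nlinarith)
  have hlogle : Real.log n ≤ n := (Real.log_le_sub_one_of_pos hn0).trans (by linarith)
  have hfin : c * ((n : ℝ) + 1) * Real.log n ≤ ((roughSet k n).card : ℝ) * Real.log n := by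
    refine le_trans ?_ hrec
    refine le_trans ?_ (add_le_add hB hA)
    have e1 : c * n * (Real.log n - gam k + 1)
        ≤ c * n * (Real.log X - 1 - 2 * Real.log k * (1 + Real.log k)) := by
      apply mul_le_mul_of_nonneg_left _ (by positivity)
      unfold gam
      linarith
    have e2 : c * n * (Real.log n - gam k + 1) = c * n * Real.log n - n * (c * gam k) + c * n := by
      ring
    rw [hcg] at e2
    have e3 : c * Real.log n ≤ c * n := by gcongr
    nlinarith
  exact le_of_mul_le_mul_right hfin hlogn

/-- The combinatorial heart: enough rough differences force a rainbow progression. -/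
lemma rainbow_of_rough (t n k Y : ℕ) (hk : 2 ≤ k) (htn : 0 < t * n) (c : ℕ → ℕ)
    (hc : EquinumerousColoring t n c) (hY : 2 * (k * Y) ≤ t * n)
    (hS : 2 * n * k < (roughSet k Y).card) :
    ∃ a d : ℕ, 1 ≤ a ∧ 1 ≤ d ∧ a + (k - 1) * d ≤ t * n ∧ RainbowAP k c a d := by
  classical
  by_contra hcon
  push Not at hcon
  set N := t * n with hN
  set A := N - N / 2 with hA
  -- every point of `[N]` has a colour in `[t]`
  have hcol : ∀ x ∈ Finset.Icc 1 N, c x ∈ Finset.Icc 1 t := by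
    have h1 : ((Finset.Icc 1 N).filter (fun x => c x ∈ Finset.Icc 1 t)).card = N := by
      rw [Finset.card_eq_sum_card_fiberwise (f := c) (t := Finset.Icc 1 t)]
      · rw [Finset.sum_congr rfl (g := fun _ => n)]
        · simp [hN]
        · intro i hi
          have hi' := Finset.mem_Icc.mp hi
          rw [← hc i hi'.1 hi'.2, Finset.filter_filter]
          congr 1
          apply Finset.filter_congr
          intro x _
          constructor
          · exact fun h => h.2
          · rintro rfl; exact ⟨hi, rfl⟩
      · intro x hx
        exact (Finset.mem_filter.mp hx).2
    have h2 : (Finset.Icc 1 N).filter (fun x => c x ∈ Finset.Icc 1 t) = Finset.Icc 1 N := by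
      apply Finset.eq_of_subset_of_card_le (Finset.filter_subset _ _)
      rw [h1]; simp
    intro x hx
    rw [← h2] at hx
    exact (Finset.mem_filter.mp hx).2
  set Q : Finset (Σ _ : ℕ, ℕ) :=
    (Finset.Icc 1 N).sigma (fun x => (Finset.Icc 1 N).filter (fun y => c y = c x)) with hQ
  have hQcard : Q.card = N * n := by
    rw [hQ, Finset.card_sigma, Finset.sum_congr rfl (g := fun _ => n)]
    · simp
    · intro x hx
      have := Finset.mem_Icc.mp (hcol x hx)
      exact hc (c x) this.1 this.2
  have hbound : ∀ a d : ℕ, a ∈ Finset.Icc 1 A → d ∈ roughSet k Y → a + (k - 1) * d ≤ N := by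
    intro a d ha hd
    rw [Finset.mem_Icc] at ha
    rw [mem_roughSet] at hd
    have : (k - 1) * d ≤ k * Y := Nat.mul_le_mul (by omega) hd.1.2
    omega
  have hpair : ∀ z : ℕ × ℕ, ∃ i j : ℕ, z ∈ Finset.Icc 1 A ×ˢ roughSet k Y →
      i < j ∧ j < k ∧ c (z.1 + i * z.2) = c (z.1 + j * z.2) := by
    rintro ⟨a, d⟩
    by_cases hz : (a, d) ∈ Finset.Icc 1 A ×ˢ roughSet k Y
    · have hz' := Finset.mem_product.mp hz
      have h := hcon a d (Finset.mem_Icc.mp hz'.1).1 (mem_roughSet.mp hz'.2).1.1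
        (hbound a d hz'.1 hz'.2)
      unfold RainbowAP at h
      push Not at h
      obtain ⟨i, hi, j, hj, hij, hne⟩ := h
      rcases lt_or_gt_of_ne hne with h' | h'
      · exact ⟨i, j, fun _ => ⟨h', hj, hij⟩⟩
      · exact ⟨j, i, fun _ => ⟨h', hi, hij.symm⟩⟩
    · exact ⟨0, 0, fun h => absurd h hz⟩
  choose I J hIJ using hpair
  have hle : (Finset.Icc 1 A ×ˢ roughSet k Y).card ≤ (Q ×ˢ Finset.range k).card := by
    apply Finset.card_le_card_of_injOn
      (fun z => ((⟨z.1 + I z * z.2, z.1 + J z * z.2⟩, I z) : (Σ _ : ℕ, ℕ) × ℕ))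
    · rintro ⟨a, d⟩ hz
      rw [Finset.mem_coe] at hz
      obtain ⟨h1, h2, h3⟩ := hIJ _ hz
      have hz' := Finset.mem_product.mp hz
      have hb := hbound a d hz'.1 hz'.2
      have ha := (Finset.mem_Icc.mp hz'.1).1
      have hJ : J (a, d) * d ≤ (k - 1) * d := Nat.mul_le_mul_right _ (by omega)
      have hI : I (a, d) * d ≤ (k - 1) * d := Nat.mul_le_mul_right _ (by omega)
      simp only [Finset.coe_product, Set.mem_prod, Finset.mem_coe, hQ, Finset.mem_sigma,
        Finset.mem_filter, Finset.mem_Icc, Finset.mem_range]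
      simp only at h3 ha
      refine ⟨⟨⟨by omega, by omega⟩, ⟨by omega, by omega⟩, h3.symm⟩, by omega⟩
    · rintro ⟨a, d⟩ hz ⟨a', d'⟩ hz' heq
      rw [Finset.mem_coe] at hz hz'
      obtain ⟨h1, h2, -⟩ := hIJ _ hz
      obtain ⟨h1', h2', -⟩ := hIJ _ hz'
      have hd := mem_roughSet.mp (Finset.mem_product.mp hz).2
      have hd' := mem_roughSet.mp (Finset.mem_product.mp hz').2
      simp only [Prod.mk.injEq, Sigma.mk.injEq, heq_eq_eq] at heq
      obtain ⟨⟨e1, e2⟩, e3⟩ := heq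
      generalize I (a, d) = i at *
      generalize J (a, d) = j at *
      generalize I (a', d') = i' at *
      generalize J (a', d') = j' at *
      subst e3
      simp only at hd hd'
      obtain ⟨m, rfl⟩ := Nat.exists_eq_add_of_lt h1
      obtain ⟨m', rfl⟩ := Nat.exists_eq_add_of_lt h1'
      have e4 : (m + 1) * d = (m' + 1) * d' := by
        have x1 : a + (i + m + 1) * d = (a + i * d) + (m + 1) * d := by ring
        have x2 : a' + (i + m' + 1) * d' = (a' + i * d') + (m' + 1) * d' := by ring
        omega
      have e5 := rough_unique hd.2 hd'.2 (by omega) (by omega) (by omega) (by omega) e4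
      rw [e5] at e4
      have e6 : d = d' := Nat.eq_of_mul_eq_mul_left (by omega) e4
      subst e6
      have e7 : a = a' := by omega
      rw [e7]
  rw [Finset.card_product, Finset.card_product, hQcard, Finset.card_range, Nat.card_Icc] at hle
  have hA2 : N ≤ 2 * A := by omega
  have : N * (roughSet k Y).card ≤ N * (2 * n * k) := by
    calc N * (roughSet k Y).card ≤ 2 * A * (roughSet k Y).card := Nat.mul_le_mul_right _ hA2
      _ = 2 * ((A + 1 - 1) * (roughSet k Y).card) := by rw [Nat.add_sub_cancel]; ring
      _ ≤ 2 * (N * n * k) := Nat.mul_le_mul_left _ hle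
      _ = _ := by ring
  have := Nat.le_of_mul_le_mul_left this htn
  omega

lemma theta_half_eventually :
    ∀ᶠ n : ℕ in Filter.atTop, (n : ℝ) / 2 ≤ Chebyshev.theta n := by
  have h := (isLittleO_log_rpow_atTop (r := 1 / 4) (by norm_num)).bound
    (show (0 : ℝ) < 1 by norm_num)
  have h' := tendsto_natCast_atTop_atTop (R := ℝ) |>.eventually h
  filter_upwards [h', Filter.eventually_ge_atTop (10 ^ 8)] with n hn hn8
  have hn8' : (10 : ℝ) ^ 8 ≤ n := by exact_mod_cast hn8
  have hn0 : (0 : ℝ) ≤ n := by linarith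
  rw [Real.norm_of_nonneg (Real.log_natCast_nonneg n), Real.norm_of_nonneg (by positivity),
    one_mul] at hn
  have hth := Chebyshev.theta_ge n
  have hl2 := Real.log_two_gt_d9
  set u := (n : ℝ) ^ ((1 : ℝ) / 4) with hu
  have hu0 : 0 ≤ u := by positivity
  have hu4 : u ^ 4 = n := by
    rw [hu, ← Real.rpow_natCast, ← Real.rpow_mul hn0]; norm_num
  have hsq : √(n : ℝ) = u ^ 2 := by
    rw [← hu4, show u ^ 4 = (u ^ 2) ^ 2 by ring, Real.sqrt_sq (by positivity)]
  have hu100 : 100 ≤ u := by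
    by_contra hlt
    push Not at hlt
    have : u ^ 4 < 100 ^ 4 := pow_lt_pow_left₀ hlt hu0 (by norm_num)
    rw [hu4] at this
    norm_num at this hn8'
    linarith
  have hl1 : Real.log ((n : ℝ) + 1) ≤ Real.log n + 1 := by
    have : (n : ℝ) + 1 ≤ n * Real.exp 1 := by
      have := Real.add_one_le_exp (1 : ℝ)
      nlinarith
    calc _ ≤ Real.log (n * Real.exp 1) := Real.log_le_log (by positivity) this
      _ = _ := by rw [Real.log_mul (by positivity) (Real.exp_ne_zero _), Real.log_exp]
  have hl : 2 * √(n : ℝ) * Real.log n ≤ 2 * u ^ 2 * u := by rw [hsq]; gcongr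
  have p3 : 100 * u ^ 3 ≤ u ^ 4 := by nlinarith [pow_nonneg hu0 3]
  have p1 : u + 1 ≤ u ^ 3 := by nlinarith [pow_nonneg hu0 2]
  have p4 : (n : ℝ) * 0.69 ≤ n * Real.log 2 := by gcongr; linarith
  nlinarith

lemma gam_eventually :
    ∀ᶠ k : ℕ in Filter.atTop, 16 * gam k < √(k : ℝ) := by
  have h := (isLittleO_log_rpow_atTop (r := 1 / 8) (by norm_num)).bound
    (show (0 : ℝ) < 1 by norm_num)
  have h' := tendsto_natCast_atTop_atTop (R := ℝ) |>.eventually h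
  filter_upwards [h', Filter.eventually_ge_atTop (100 ^ 8)] with k hn hk8
  have hk8' : (100 : ℝ) ^ 8 ≤ k := by exact_mod_cast hk8
  have hk0 : (0 : ℝ) ≤ k := le_trans (by norm_num) hk8'
  rw [Real.norm_of_nonneg (Real.log_natCast_nonneg k), Real.norm_of_nonneg (by positivity),
    one_mul] at hn
  set u := (k : ℝ) ^ ((1 : ℝ) / 8) with hu
  have hu0 : 0 ≤ u := by positivity
  have hu8 : u ^ 8 = k := by
    rw [hu, ← Real.rpow_natCast, ← Real.rpow_mul hk0]; norm_num
  have hsq : √(k : ℝ) = u ^ 4 := by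
    rw [← hu8, show u ^ 8 = (u ^ 4) ^ 2 by ring, Real.sqrt_sq (by positivity)]
  have hu100 : 100 ≤ u := by
    by_contra hlt
    push Not at hlt
    have : u ^ 8 < 100 ^ 8 := pow_lt_pow_left₀ hlt hu0 (by norm_num)
    rw [hu8] at this
    linarith
  have hkpos : (0 : ℝ) < k := lt_of_lt_of_le (by norm_num) hk8'
  have hl0 : 0 ≤ Real.log k := Real.log_natCast_nonneg k
  have hg : gam k ≤ 3 + 4 * u + 2 * u ^ 2 := by
    unfold gam
    rw [Real.log_mul (by norm_num) (by positivity), Real.log_pow]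
    have := Real.log_two_lt_d9
    push_cast
    nlinarith
  rw [hsq]
  have p2 : 100 * u ≤ u ^ 2 := by nlinarith
  have p3 : 10000 * u ^ 2 ≤ u ^ 4 := by nlinarith [mul_le_mul hu100 hu100 (by norm_num) hu0]
  linarith

end Helpers

/-- For every `ε > 0` there is a constant `C > 0` such that for all `k ≥ 3`,
all `n > k`, and every `t` with `C * k^(5/2+ε) ≤ t ≤ k^3`, every equinumerous
`t`-coloring of `[t*n]` contains a rainbow arithmetic progression of
length `k`. -/
theorem rainbow_AP_large_n (ε : ℝ) (hε : 0 < ε) :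
    ∃ C : ℝ, 0 < C ∧ ∀ k : ℕ, 3 ≤ k → ∀ n : ℕ, k < n →
      ∀ t : ℕ, C * (k : ℝ) ^ ((5 : ℝ) / 2 + ε) ≤ (t : ℝ) → t ≤ k ^ 3 →
        ∀ c : ℕ → ℕ, EquinumerousColoring t n c →
          ∃ a d : ℕ, 1 ≤ a ∧ 1 ≤ d ∧ a + (k - 1) * d ≤ t * n ∧
            RainbowAP k c a d := by
  obtain ⟨K1, hK1⟩ := Filter.eventually_atTop.mp theta_half_eventually
  obtain ⟨K2, hK2⟩ := Filter.eventually_atTop.mp gam_eventually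
  set K := K1 + K2 + 16 with hK
  have hKR : (16 : ℝ) ≤ K := by exact_mod_cast (by omega : 16 ≤ K)
  refine ⟨K, by linarith, ?_⟩
  intro k hk3 n hkn t ht htk c hc
  have hkR : (3 : ℝ) ≤ k := by exact_mod_cast hk3
  have hk0 : (0 : ℝ) < k := by linarith
  set s := √(k : ℝ) with hs
  have hs0 : 0 ≤ s := Real.sqrt_nonneg _
  have hss : s * s = k := Real.mul_self_sqrt hk0.le
  have hs1 : 1 ≤ s := by nlinarith
  have hpow : (k : ℝ) ^ 2 * s ≤ (k : ℝ) ^ ((5 : ℝ) / 2 + ε) := by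
    calc (k : ℝ) ^ 2 * s = (k : ℝ) ^ ((5 : ℝ) / 2) := by
          rw [hs, Real.sqrt_eq_rpow, ← Real.rpow_natCast, ← Real.rpow_add hk0]; norm_num
      _ ≤ _ := Real.rpow_le_rpow_of_exponent_le (by linarith) (by linarith)
  have ht1 : K * ((k : ℝ) ^ 2 * s) ≤ t := le_trans (by gcongr) ht
  have htkR : (t : ℝ) ≤ (k : ℝ) ^ 3 := by exact_mod_cast htk
  have hKs : (K : ℝ) ≤ s := by
    have h1 : (K : ℝ) * ((k : ℝ) ^ 2 * s) ≤ s * ((k : ℝ) ^ 2 * s) := by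
      calc _ ≤ (k : ℝ) ^ 3 := ht1.trans htkR
        _ = (k : ℝ) ^ 2 * (s * s) := by rw [hss]; ring
        _ = _ := by ring
    exact le_of_mul_le_mul_right h1 (by positivity)
  have hKk : K ≤ k := by
    have : (K : ℝ) ≤ k := by nlinarith
    exact_mod_cast this
  have ht2 : 16 * ((k : ℝ) ^ 2 * s) ≤ t := le_trans (by gcongr) ht1
  have hn0 : (0 : ℝ) < n := by exact_mod_cast (by omega : 0 < n)
  have hknR : (k : ℝ) ≤ n := by exact_mod_cast hkn.le
  set Y := t * n / (2 * k) with hY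
  have h2k : 0 < 2 * k := by omega
  have htn : 2 * k ^ 3 ≤ t * n := by
    have : 2 * (k : ℝ) ^ 3 ≤ (t : ℝ) * n := by
      calc 2 * (k : ℝ) ^ 3 = (2 * (k : ℝ) ^ 2) * k := by ring
        _ ≤ (t : ℝ) * n := by
          apply mul_le_mul _ hknR hk0.le (by positivity)
          nlinarith [sq_nonneg (k : ℝ)]
    exact_mod_cast this
  have hYk : k ^ 2 ≤ Y := by
    rw [hY, Nat.le_div_iff_mul_le h2k]
    calc k ^ 2 * (2 * k) = 2 * k ^ 3 := by ring
      _ ≤ _ := htn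
  have hYR : (t : ℝ) * n ≤ ((Y : ℝ) + 1) * (2 * k) := by
    have := Nat.lt_div_mul_add (a := t * n) h2k
    rw [← hY] at this
    have : t * n ≤ (Y + 1) * (2 * k) := by nlinarith
    exact_mod_cast this
  have hcard := rough_lower k (by omega) (fun m hm => hK1 m (by omega)) Y hYk
  have hg := gam_pos k (by omega)
  have hgs := hK2 k (by omega)
  apply rainbow_of_rough t n k Y (by omega) (lt_of_lt_of_le (by positivity) htn) c hc
  · calc 2 * (k * Y) = (2 * k) * Y := by ring
      _ ≤ t * n := Nat.mul_div_le _ _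
  · have h1 : 8 * n * k * s ≤ (Y : ℝ) + 1 := by
      have : (8 * n * k * s) * (2 * k) ≤ ((Y : ℝ) + 1) * (2 * k) := by
        calc (8 * n * k * s) * (2 * k) = (16 * ((k : ℝ) ^ 2 * s)) * n := by ring
          _ ≤ t * n := by gcongr
          _ ≤ _ := hYR
      exact le_of_mul_le_mul_right this (by positivity)
    have h2 : (2 * n * k : ℝ) < 1 / (4 * gam k) * ((Y : ℝ) + 1) := by
      rw [one_div, inv_mul_eq_div, lt_div_iff₀ (by positivity)]
      have hnk : 0 < (n : ℝ) * k := by positivity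
      nlinarith [mul_lt_mul_of_pos_left hgs hnk]
    have h3 := h2.trans_le hcard
    exact_mod_cast h3
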